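/- Fix ℓ ≤ k and items i, j with u_i > u_j. Let R_{i\j} be the set of length-k rankings with i but not j among the top ℓ positions, and for r ∈ R_{i\j} let r_{i→j} denote r with item i replaced by item j. Then, summing over consideration sets C containing both i and j, Σ_{r∈R_{i\j}} Σ_{C: i,j∈C} Pr_C(C)·Pr_PL(r | C) > Σ_{r∈R_{i\j}} Σ_{C: i,j∈C} Pr_C(C)·Pr_PL(r_{i→j} | C). -/

import Mathlib

open scoped Classical
open Finset

noncomputable section

/-- Weight of a consideration set `C`: each item in `C` is considered (prob `p i`),
each item outside is not considered (prob `1 - p j`). -/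
def considerWeight (n : ℕ) (p : Fin n → ℝ) (C : Finset (Fin n)) : ℝ :=
  (∏ i ∈ C, p i) * ∏ j ∈ Cᶜ, (1 - p j)

/-- Normalizing constant `z_{k,p}`: total weight of consideration sets of size at least `k`. -/
def zConst (n k : ℕ) (p : Fin n → ℝ) : ℝ :=
  ∑ C ∈ Finset.univ.filter (fun C : Finset (Fin n) => k ≤ C.card), considerWeight n p C

/-- Probability of consideration set `C` (conditioned on `|C| ≥ k`). -/
def prC (n k : ℕ) (p : Fin n → ℝ) (C : Finset (Fin n)) : ℝ :=
  if k ≤ C.card then considerWeight n p C / zConst n k p else 0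

/-- Plackett–Luce probability of the length-`k` ranking `r` given consideration set `C`. -/
def prPL (n k : ℕ) (u : Fin n → ℝ) (r : Fin k ↪ Fin n) (C : Finset (Fin n)) : ℝ :=
  if ∀ t : Fin k, r t ∈ C then
    ∏ t : Fin k, Real.exp (u (r t)) /
      ∑ j ∈ C \ (Finset.Iio t).image r, Real.exp (u j)
  else 0

/-- Plackett–Luce-with-consideration (PL+C) probability of the ranking `r`. -/
def prPLC (n k : ℕ) (u p : Fin n → ℝ) (r : Fin k ↪ Fin n) : ℝ :=
  ∑ C : Finset (Fin n), prC n k p C * prPL n k u r C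

/-- PL probability of a set of rankings. -/
def prPLset (n k : ℕ) (u : Fin n → ℝ) (R : Finset (Fin k ↪ Fin n)) (C : Finset (Fin n)) : ℝ :=
  ∑ r ∈ R, prPL n k u r C

/-- PL+C probability of a set of rankings. -/
def prPLCset (n k : ℕ) (u p : Fin n → ℝ) (R : Finset (Fin k ↪ Fin n)) : ℝ :=
  ∑ r ∈ R, prPLC n k u p r

/-- `R_{i≤ℓ}`: the set of length-`k` rankings with item `i` among the top `ℓ` positions. -/
def topSet (n k : ℕ) (i : Fin n) (ℓ : ℕ) : Finset (Fin k ↪ Fin n) :=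
  Finset.univ.filter (fun r => ∃ t : Fin k, (t : ℕ) < ℓ ∧ r t = i)

theorem aux_sum_le {n : ℕ} (f : Fin n → ℝ) (i j : Fin n) (A : Finset (Fin n))
    (hf : f j < f i) (hA : i ∈ A → j ∈ A) :
    ∑ x ∈ A, f x ≤ ∑ x ∈ A, f (Equiv.swap i j x) := by
  by_cases hi : i ∈ A
  · have hj := hA hi
    apply le_of_eq
    symm
    apply Finset.sum_equiv (Equiv.swap i j)
    · intro x
      rcases eq_or_ne x i with rfl | h1
      · simp [hi, hj]
      · rcases eq_or_ne x j with rfl | h2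
        · simp [hi, hj]
        · rw [Equiv.swap_apply_of_ne_of_ne h1 h2]
    · intros; rfl
  · apply Finset.sum_le_sum
    intro x hx
    have h1 : x ≠ i := by rintro rfl; exact hi hx
    rcases eq_or_ne x j with rfl | h2
    · simp [hf.le]
    · rw [Equiv.swap_apply_of_ne_of_ne h1 h2]

theorem aux_sum_lt {n : ℕ} (f : Fin n → ℝ) (i j : Fin n) (A : Finset (Fin n))
    (hf : f j < f i) (hi : i ∉ A) (hj : j ∈ A) :
    ∑ x ∈ A, f x < ∑ x ∈ A, f (Equiv.swap i j x) := by
  apply Finset.sum_lt_sum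
  · intro x hx
    have h1 : x ≠ i := by rintro rfl; exact hi hx
    rcases eq_or_ne x j with rfl | h2
    · simp [hf.le]
    · rw [Equiv.swap_apply_of_ne_of_ne h1 h2]
  · exact ⟨j, hj, by simpa using hf⟩

theorem aux_swap_mem {n : ℕ} (i j : Fin n) (C : Finset (Fin n)) (hi : i ∈ C) (hj : j ∈ C)
    (x : Fin n) : Equiv.swap i j x ∈ C ↔ x ∈ C := by
  rcases eq_or_ne x i with rfl | h1
  · simp [hi, hj]
  · rcases eq_or_ne x j with rfl | h2
    · simp [hi, hj]
    · rw [Equiv.swap_apply_of_ne_of_ne h1 h2]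

theorem aux_nonneg (n k : ℕ) (u : Fin n → ℝ) (r : Fin k ↪ Fin n) (C : Finset (Fin n)) :
    0 ≤ prPL n k u r C := by
  unfold prPL
  split_ifs
  · positivity
  · exact le_rfl

theorem aux_lt (n k : ℕ) (u : Fin n → ℝ) (i j : Fin n) (hu : u j < u i)
    (r : Fin k ↪ Fin n) (s : Fin k) (hs : r s = i) (hsj : ∀ t, r t = j → s < t)
    (C : Finset (Fin n)) (hi : i ∈ C) (hj : j ∈ C) (hr : ∀ t, r t ∈ C) :
    prPL n k u (r.trans (Equiv.swap i j).toEmbedding) C < prPL n k u r C := by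
  have hr' : ∀ t, (r.trans (Equiv.swap i j).toEmbedding) t ∈ C := by
    intro t
    simpa using (aux_swap_mem i j C hi hj (r t)).2 (hr t)
  unfold prPL
  rw [if_pos hr, if_pos hr', Finset.prod_div_distrib, Finset.prod_div_distrib]
  have hexp : Real.exp (u j) < Real.exp (u i) := Real.exp_lt_exp.2 hu
  -- denominators
  have hD : ∀ t : Fin k, ∑ x ∈ C \ (Finset.Iio t).image (r.trans (Equiv.swap i j).toEmbedding),
      Real.exp (u x) = ∑ x ∈ C \ (Finset.Iio t).image r, Real.exp (u (Equiv.swap i j x)) := by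
    intro t
    symm
    apply Finset.sum_equiv (Equiv.swap i j)
    · intro x
      simp only [Finset.mem_sdiff, aux_swap_mem i j C hi hj x, Finset.mem_image,
        Function.Embedding.trans_apply, Equiv.coe_toEmbedding, EmbeddingLike.apply_eq_iff_eq]
    · intros; rfl
  simp only [hD]
  have hpos : ∀ t : Fin k, 0 < ∑ x ∈ C \ (Finset.Iio t).image r, Real.exp (u x) := by
    intro t
    apply Finset.sum_pos (fun _ _ => Real.exp_pos _)
    refine ⟨r t, ?_⟩
    simp [hr t]
  have hle : ∀ t : Fin k, ∑ x ∈ C \ (Finset.Iio t).image r, Real.exp (u x) ≤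
      ∑ x ∈ C \ (Finset.Iio t).image r, Real.exp (u (Equiv.swap i j x)) := by
    intro t
    apply aux_sum_le (fun x => Real.exp (u x)) i j _ hexp
    intro h
    simp only [Finset.mem_sdiff, Finset.mem_image, Finset.mem_Iio, not_exists, not_and] at h ⊢
    refine ⟨hj, fun t' ht' h' => ?_⟩
    exact h.2 s ((hsj t' h').trans ht') hs
  have hN : ∀ g : Fin n → ℝ, ∏ t : Fin k, Real.exp (g (r t)) =
      Real.exp (∑ x ∈ Finset.univ.map r, g x) := by
    intro g
    rw [Finset.sum_map, Real.exp_sum]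
  have hN1 := hN u
  have hN2 := hN (fun x => u (Equiv.swap i j x))
  have hib : i ∈ Finset.univ.map r := by simp only [Finset.mem_map, Finset.mem_univ, true_and]; exact ⟨s, hs⟩
  simp only [Function.Embedding.trans_apply, Equiv.coe_toEmbedding]
  rw [hN1, hN2]
  have hneg : (fun x => - u x) i < (fun x => - u x) j := by simpa using hu
  have hPpos : 0 < ∏ t : Fin k, ∑ x ∈ C \ (Finset.Iio t).image r, Real.exp (u x) :=
    Finset.prod_pos fun t _ => hpos t
  by_cases hjr : ∃ t, r t = j
  · obtain ⟨t0, ht0⟩ := hjr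
    have h1 := aux_sum_le (fun x => - u x) j i (Finset.univ.map r) hneg (fun _ => hib)
    simp only [Finset.sum_neg_distrib, neg_le_neg_iff, Equiv.swap_comm j i] at h1
    apply div_lt_div₀' (Real.exp_le_exp.2 h1) _ (Real.exp_pos _) hPpos
    apply Finset.prod_lt_prod (fun t _ => hpos t) (fun t _ => hle t)
    refine ⟨t0, Finset.mem_univ _, ?_⟩
    apply aux_sum_lt (fun x => Real.exp (u x)) i j _ hexp
    · simp only [Finset.mem_sdiff, Finset.mem_image, Finset.mem_Iio, not_and, not_not]
      exact fun _ => ⟨s, hsj t0 ht0, hs⟩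
    · simp only [Finset.mem_sdiff, Finset.mem_image, Finset.mem_Iio, not_exists, not_and]
      refine ⟨hj, fun t' ht' h' => ?_⟩
      have := r.injective (h'.trans ht0.symm)
      exact absurd this ht'.ne
  · have h1 := aux_sum_lt (fun x => - u x) j i (Finset.univ.map r) hneg
      (by simpa using hjr) hib
    simp only [Finset.sum_neg_distrib, neg_lt_neg_iff, Equiv.swap_comm j i] at h1
    apply div_lt_div₀ (Real.exp_lt_exp.2 h1) _ (Real.exp_pos _).le hPpos
    exact Finset.prod_le_prod (fun t _ => (hpos t).le) (fun t _ => hle t)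

theorem aux_le (n k : ℕ) (u : Fin n → ℝ) (i j : Fin n) (hu : u j < u i)
    (r : Fin k ↪ Fin n) (s : Fin k) (hs : r s = i) (hsj : ∀ t, r t = j → s < t)
    (C : Finset (Fin n)) (hi : i ∈ C) (hj : j ∈ C) :
    prPL n k u (r.trans (Equiv.swap i j).toEmbedding) C ≤ prPL n k u r C := by
  by_cases hr : ∀ t, r t ∈ C
  · exact (aux_lt n k u i j hu r s hs hsj C hi hj hr).le
  · have : prPL n k u (r.trans (Equiv.swap i j).toEmbedding) C = 0 := by
      unfold prPL
      rw [if_neg]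
      intro h
      apply hr
      intro t
      exact (aux_swap_mem i j C hi hj (r t)).1 (by simpa using h t)
    rw [this]
    exact aux_nonneg n k u r C

theorem aux_weight_nonneg (n : ℕ) (p : Fin n → ℝ) (hp : ∀ a, 0 < p a ∧ p a ≤ 1)
    (C : Finset (Fin n)) : 0 ≤ considerWeight n p C := by
  unfold considerWeight
  apply mul_nonneg
  · exact Finset.prod_nonneg fun a _ => (hp a).1.le
  · exact Finset.prod_nonneg fun a _ => sub_nonneg.2 (hp a).2

theorem aux_weight_univ (n : ℕ) (p : Fin n → ℝ) (hp : ∀ a, 0 < p a ∧ p a ≤ 1) :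
    0 < considerWeight n p Finset.univ := by
  unfold considerWeight
  simpa using Finset.prod_pos fun a _ => (hp a).1

theorem aux_z_pos (n k : ℕ) (p : Fin n → ℝ) (hp : ∀ a, 0 < p a ∧ p a ≤ 1) (hkn : k < n) :
    0 < zConst n k p := by
  unfold zConst
  apply Finset.sum_pos' (fun C _ => aux_weight_nonneg n p hp C)
  exact ⟨Finset.univ, by simp [hkn.le], aux_weight_univ n p hp⟩

theorem aux_prC_nonneg (n k : ℕ) (p : Fin n → ℝ) (hp : ∀ a, 0 < p a ∧ p a ≤ 1) (hkn : k < n)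
    (C : Finset (Fin n)) : 0 ≤ prC n k p C := by
  unfold prC
  split_ifs
  · exact div_nonneg (aux_weight_nonneg n p hp C) (aux_z_pos n k p hp hkn).le
  · exact le_rfl

theorem aux_prC_univ (n k : ℕ) (p : Fin n → ℝ) (hp : ∀ a, 0 < p a ∧ p a ≤ 1) (hkn : k < n) :
    0 < prC n k p Finset.univ := by
  unfold prC
  rw [if_pos (by simp [hkn.le])]
  exact div_pos (aux_weight_univ n p hp) (aux_z_pos n k p hp hkn)

theorem aux_exists (n k : ℕ) (i j : Fin n) (hij : i ≠ j) (hk : 0 < k) (hkn : k < n) :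
    ∃ r : Fin k ↪ Fin n, r ⟨0, hk⟩ = i ∧ ∀ t, r t ≠ j := by
  have hc : Fintype.card (Fin k) ≤ Fintype.card {x : Fin n // x ≠ j} := by
    simp [Fintype.card_subtype_compl]
    omega
  obtain ⟨e⟩ := Function.Embedding.nonempty_of_card_le hc
  refine ⟨(e.trans (Equiv.swap (e ⟨0, hk⟩) ⟨i, hij⟩).toEmbedding).trans
    (Function.Embedding.subtype _), by simp, fun t => ?_⟩
  exact ((e.trans (Equiv.swap (e ⟨0, hk⟩) ⟨i, hij⟩).toEmbedding) t).2

/-- summing over rankings with `i` but not `j` in the top `ℓ` positions, and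
over consideration sets containing both `i` and `j`, the total PL+C mass of the rankings
strictly exceeds that of the rankings with `i` replaced by `j`. -/
theorem sum_replace_strict (n k ℓ : ℕ) (u p : Fin n → ℝ) (i j : Fin n)
    (hp : ∀ a, 0 < p a ∧ p a ≤ 1) (hu : u i > u j) (hij : i ≠ j)
    (hℓ : 1 ≤ ℓ) (hℓk : ℓ ≤ k) (hkn : k < n) :
    ∑ r ∈ Finset.univ.filter (fun r : Fin k ↪ Fin n =>
        (∃ t : Fin k, (t : ℕ) < ℓ ∧ r t = i) ∧ ¬∃ t : Fin k, (t : ℕ) < ℓ ∧ r t = j),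
      ∑ C ∈ Finset.univ.filter (fun C : Finset (Fin n) => i ∈ C ∧ j ∈ C),
        prC n k p C * prPL n k u r C
    >
    ∑ r ∈ Finset.univ.filter (fun r : Fin k ↪ Fin n =>
        (∃ t : Fin k, (t : ℕ) < ℓ ∧ r t = i) ∧ ¬∃ t : Fin k, (t : ℕ) < ℓ ∧ r t = j),
      ∑ C ∈ Finset.univ.filter (fun C : Finset (Fin n) => i ∈ C ∧ j ∈ C),
        prC n k p C * prPL n k u (r.trans (Equiv.swap i j).toEmbedding) C := by
  have key : ∀ r ∈ Finset.univ.filter (fun r : Fin k ↪ Fin n =>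
        (∃ t : Fin k, (t : ℕ) < ℓ ∧ r t = i) ∧ ¬∃ t : Fin k, (t : ℕ) < ℓ ∧ r t = j),
      ∃ s, r s = i ∧ ∀ t, r t = j → s < t := by
    intro r hr
    obtain ⟨⟨s, hs, hsi⟩, h⟩ := (Finset.mem_filter.1 hr).2
    refine ⟨s, hsi, fun t ht => ?_⟩
    by_contra hlt
    exact h ⟨t, lt_of_le_of_lt (not_lt.1 hlt) hs, ht⟩
  have hle : ∀ r ∈ Finset.univ.filter (fun r : Fin k ↪ Fin n =>
        (∃ t : Fin k, (t : ℕ) < ℓ ∧ r t = i) ∧ ¬∃ t : Fin k, (t : ℕ) < ℓ ∧ r t = j),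
      ∀ C ∈ Finset.univ.filter (fun C : Finset (Fin n) => i ∈ C ∧ j ∈ C),
        prC n k p C * prPL n k u (r.trans (Equiv.swap i j).toEmbedding) C ≤
          prC n k p C * prPL n k u r C := by
    intro r hr C hC
    obtain ⟨s, hs, hsj⟩ := key r hr
    obtain ⟨hi, hj⟩ := (Finset.mem_filter.1 hC).2
    exact mul_le_mul_of_nonneg_left (aux_le n k u i j hu r s hs hsj C hi hj)
      (aux_prC_nonneg n k p hp hkn C)
  obtain ⟨r, hr0, hrj⟩ := aux_exists n k i j hij (by omega) hkn
  have hrmem : r ∈ Finset.univ.filter (fun r : Fin k ↪ Fin n =>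
        (∃ t : Fin k, (t : ℕ) < ℓ ∧ r t = i) ∧ ¬∃ t : Fin k, (t : ℕ) < ℓ ∧ r t = j) :=
    Finset.mem_filter.2 ⟨Finset.mem_univ _, ⟨_, by simp; omega, hr0⟩,
      fun ⟨t, _, ht⟩ => hrj t ht⟩
  apply Finset.sum_lt_sum (fun r hr => Finset.sum_le_sum (hle r hr))
  refine ⟨r, hrmem, Finset.sum_lt_sum (hle r hrmem) ⟨Finset.univ, by simp, ?_⟩⟩
  exact mul_lt_mul_of_pos_left
    (aux_lt n k u i j hu r _ hr0 (fun t ht => absurd ht (hrj t)) _ (by simp) (by simp) (by simp))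
    (aux_prC_univ n k p hp hkn)
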